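/- For an invertible RDS φ on 𝕊¹: the set Ω_c of contractive sample points is 𝓕₊-measurable; the crack-point map r̃:Ω_c→𝕊¹ is measurable with respect to the σ-algebra of 𝓕₊-measurable subsets of Ω_c; and for each t∈𝕋⁺ one has (θ^t)⁻¹(Ω_c)=Ω_c and r̃(θ^tω)=φ(t,ω)r̃(ω) for all ω∈Ω_c. -/

import Mathlib

open MeasureTheory Filter Topology Set ENNReal

noncomputable section

/-- The natural projection `π : ℝ → 𝕊¹ = ℝ/ℤ`. -/
def circleProj (x : ℝ) : UnitAddCircle := (x : UnitAddCircle)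

/-- `f` is an orientation-preserving homeomorphism of the circle: it admits a strictly
monotone degree-one lift. -/
def OrientPreserving (f : UnitAddCircle ≃ₜ UnitAddCircle) : Prop :=
  ∃ F : ℝ → ℝ, StrictMono F ∧ (∀ x : ℝ, F (x + 1) = F x + 1) ∧
    ∀ x : ℝ, f (circleProj x) = circleProj (F x)

/-- The anticlockwise distance `d₊(x,y) = min {r ≥ 0 : π(x' + r) = y}` (`x'` any lift of `x`). -/
def dPlus (x y : UnitAddCircle) : ℝ :=
  sInf {r : ℝ | 0 ≤ r ∧ ∃ x' : ℝ, circleProj x' = x ∧ circleProj (x' + r) = y}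

/-- An invertible random dynamical system on the circle, in discrete or continuous time,
driven by a stationary memoryless noise process. -/
structure RDS (Ω : Type) [m : MeasurableSpace Ω] where
  /-- the time set `𝕋⁺`: either `ℕ ∪ {0}` or `[0,∞)`, viewed inside `ℝ` -/
  T : Set ℝ
  T_cases : T = Set.range (fun n : ℕ => (n : ℝ)) ∨ T = Set.Ici (0 : ℝ)
  /-- the filtration -/
  F : ℝ → MeasurableSpace Ω
  F_le : ∀ t ∈ T, F t ≤ m
  F_mono : ∀ s ∈ T, ∀ t ∈ T, s ≤ t → F s ≤ F t
  /-- the probability measure -/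
  P : Measure Ω
  P_prob : IsProbabilityMeasure P
  /-- the time-shift maps on the noise space -/
  θ : ℝ → Ω → Ω
  θ_zero : θ 0 = id
  θ_add : ∀ s ∈ T, ∀ t ∈ T, θ (s + t) = θ t ∘ θ s
  θ_preserving : ∀ t ∈ T, MeasurePreserving (θ t) P P
  θ_adapted : ∀ s ∈ T, ∀ t ∈ T, @Measurable Ω Ω (F (s + t)) (F s) (θ t)
  θ_indep : ∀ t ∈ T, ∀ E A : Set Ω, MeasurableSet[F t] E →
    MeasurableSet[⨆ s ∈ T, F s] A → P (E ∩ θ t ⁻¹' A) = P E * P A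
  /-- the random homeomorphisms -/
  φ : ℝ → Ω → UnitAddCircle ≃ₜ UnitAddCircle
  φ_orient : ∀ t ∈ T, ∀ ω, OrientPreserving (φ t ω)
  φ_meas : ∀ t ∈ T, @Measurable (Ω × UnitAddCircle) UnitAddCircle
    ((F t).prod inferInstance) inferInstance (fun p => φ t p.1 p.2)
  φ_zero : ∀ ω, φ 0 ω = Homeomorph.refl UnitAddCircle
  φ_cocycle : ∀ s ∈ T, ∀ t ∈ T, ∀ ω x, φ (s + t) ω x = φ t (θ s ω) (φ s ω x)
  φ_cadlag_right : ∀ ω, ∀ t ∈ T, ∀ tn : ℕ → ℝ, (∀ n, tn n ∈ T) → Antitone tn →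
    Tendsto tn atTop (𝓝 t) → ∀ (xn : ℕ → UnitAddCircle) (x : UnitAddCircle),
      Tendsto xn atTop (𝓝 x) →
      Tendsto (fun n => φ (tn n) ω (xn n)) atTop (𝓝 (φ t ω x))
  /-- the left-limit maps -/
  φ_left_lim : ℝ → Ω → UnitAddCircle → UnitAddCircle
  φ_cadlag_left : ∀ ω, ∀ t ∈ T, ∀ tn : ℕ → ℝ, (∀ n, tn n ∈ T) → StrictMono tn →
    Tendsto tn atTop (𝓝 t) → ∀ (xn : ℕ → UnitAddCircle) (x : UnitAddCircle),
      Tendsto xn atTop (𝓝 x) →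
      Tendsto (fun n => φ (tn n) ω (xn n)) atTop (𝓝 (φ_left_lim t ω x))

/-- A probability measure on the circle is atomless if every singleton is null. -/
def Atomless (ρ : Measure UnitAddCircle) : Prop := ∀ x, ρ {x} = 0

/-- A measure on the circle has full support. -/
def FullSupport (ρ : Measure UnitAddCircle) : Prop :=
  ∀ U : Set UnitAddCircle, IsOpen U → U.Nonempty → 0 < ρ U

/-- The (topological) support of a measure on the circle. -/
def msupport (ρ : Measure UnitAddCircle) : Set UnitAddCircle :=
  {x | ∀ U : Set UnitAddCircle, IsOpen U → x ∈ U → 0 < ρ U}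

namespace RDS

variable {Ω : Type} [m : MeasurableSpace Ω] (S : RDS Ω)

/-- the future σ-algebra `𝓕₊ = σ(𝓕_t : t ∈ 𝕋⁺)`. -/
def Fplus : MeasurableSpace Ω := ⨆ t ∈ S.T, S.F t

/-- The filter "t → ∞ along the time set 𝕋⁺". -/
def tFilter : Filter ℝ := atTop ⊓ 𝓟 S.T

/-- two-point contractibility. -/
def Contractible : Prop := ∀ x y : UnitAddCircle, x ≠ y →
  0 < S.P {ω | ∃ t ∈ S.T, dist (S.φ t ω x) (S.φ t ω y) < dist x y}

/-- compressibility. -/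
def Compressible : Prop := ∀ x y : UnitAddCircle, x ≠ y →
  0 < S.P {ω | ∃ t ∈ S.T, dPlus (S.φ t ω x) (S.φ t ω y) < dPlus x y}

/-- `p` is a deterministic fixed point. -/
def DetFixedPoint (p : UnitAddCircle) : Prop :=
  ∀ᵐ ω ∂S.P, ∀ t ∈ S.T, S.φ t ω p = p

/-- `A` is forward-invariant. -/
def ForwardInvariant (A : Set UnitAddCircle) : Prop :=
  ∀ᵐ ω ∂S.P, ∀ t ∈ S.T, ⇑(S.φ t ω) '' A ⊆ A

/-- reverse-minimal dynamics: the only open forward-invariant sets are `∅` and `𝕊¹`. -/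
def ReverseMinimal : Prop :=
  ∀ A : Set UnitAddCircle, IsOpen A → S.ForwardInvariant A → A = ∅ ∨ A = Set.univ

/-- synchronisation. -/
def Synchronising : Prop := ∀ x y : UnitAddCircle,
  S.P {ω | Tendsto (fun t => dist (S.φ t ω x) (S.φ t ω y)) S.tFilter (𝓝 0)} = 1

/-- everywhere local stability. -/
def EverywhereLocallyStable : Prop := ∀ x : UnitAddCircle,
  S.P {ω | ∃ U : Set UnitAddCircle, IsOpen U ∧ x ∈ U ∧
    Tendsto (fun t => volume (⇑(S.φ t ω) '' U)) S.tFilter (𝓝 0)} = 1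

/-- stable synchronisation. -/
def StablySynchronising : Prop := S.Synchronising ∧ S.EverywhereLocallyStable

/-- `ρ` is reverse-stationary: `ρ(A) = ∫ ρ(φ(t,ω)A) ℙ(dω)` for all `t ∈ 𝕋⁺`, Borel `A`. -/
def ReverseStationary (ρ : Measure UnitAddCircle) : Prop :=
  ∀ t ∈ S.T, ∀ A : Set UnitAddCircle, MeasurableSet A →
    ρ A = ∫⁻ ω, ρ (⇑(S.φ t ω) '' A) ∂S.P

/-- `r` is a crack point of `ω`. -/
def CrackPoint (ω : Ω) (r : UnitAddCircle) : Prop :=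
  ∀ G : Set UnitAddCircle, IsClosed G → r ∉ G →
    Tendsto (fun t => volume (⇑(S.φ t ω) '' G)) S.tFilter (𝓝 0)

/-- the set of contractive sample points. -/
def Ωc : Set Ω := {ω | ∃ r, S.CrackPoint ω r}

/-- the reverse transition probabilities `φ̄ₓᵗ(A) = ℙ(ω : φ(t,ω)⁻¹(x) ∈ A)`. -/
def revTrans (t : ℝ) (x : UnitAddCircle) (A : Set UnitAddCircle) : ℝ≥0∞ :=
  S.P {ω | (S.φ t ω).symm x ∈ A}

/-- the forward transition probabilities `φₓᵗ(A) = ℙ(ω : φ(t,ω)x ∈ A)`. -/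
def fwdTrans (t : ℝ) (x : UnitAddCircle) (A : Set UnitAddCircle) : ℝ≥0∞ :=
  S.P {ω | S.φ t ω x ∈ A}

/-- `ρ` is stationary for a transition family `ν`. -/
def StationaryFor (ν : ℝ → UnitAddCircle → Set UnitAddCircle → ℝ≥0∞)
    (ρ : Measure UnitAddCircle) : Prop :=
  ∀ t ∈ S.T, ∀ A : Set UnitAddCircle, MeasurableSet A → ρ A = ∫⁻ x, ν t x A ∂ρ

/-- `ρ` is ergodic for a transition family `ν`. -/
def ErgodicFor (ν : ℝ → UnitAddCircle → Set UnitAddCircle → ℝ≥0∞)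
    (ρ : Measure UnitAddCircle) : Prop :=
  S.StationaryFor ν ρ ∧ ∀ A : Set UnitAddCircle, MeasurableSet A →
    (∀ t ∈ S.T, ∀ᵐ x ∂ρ, x ∈ A → ν t x A = 1) → ρ A = 0 ∨ ρ A = 1

end RDS

/-!
A crack point is detected by countably many conditions. By compactness, a closed set `C` contains
a crack point iff every finite cover of `C` by basic open sets has a member `U` with
`μ (φ t ω '' Uᶜ) → 0`: otherwise each point of `C` has a basic neighbourhood whose complement is
not contracted. Right-continuity reduces the limit to a countable set of times, because
`φ t ω '' G ⊆ φ u ω '' U` whenever `G ⊆ U` with `G` closed, `U` open and `u ≥ t` close enough to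
`t`. Two distinct points cannot both be crack points, since the complements of disjoint
neighbourhoods cover the space while the total mass is conserved. Equivariance is then the cocycle
identity together with uniqueness.
-/

section Topology

variable {ι X Y : Type*} [TopologicalSpace X] [TopologicalSpace Y]

theorem eventually_image_subset_image [CompactSpace X] [T2Space Y] {l : Filter ι}
    {f : ι → X → Y} {g : X → Y} (hf : ∀ i, (f i).Surjective) (hg : Continuous g)
    (hg_inj : g.Injective)
    (hlim : ∀ x, Tendsto (fun p : ι × X ↦ f p.1 p.2) (l ×ˢ 𝓝 x) (𝓝 (g x)))
    {K U : Set X} (hK : IsCompact K) (hU : IsOpen U) (hKU : K ⊆ U) :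
    ∀ᶠ i in l, g '' K ⊆ f i '' U := by
  have hlocal : ∀ z ∈ Uᶜ ×ˢ K, ∀ᶠ p : ι × (X × X) in l ×ˢ 𝓝 z, f p.1 p.2.1 ≠ g p.2.2 := by
    rintro ⟨z, x⟩ ⟨hz : z ∉ U, hx : x ∈ K⟩
    have hzx : z ≠ x := fun h ↦ hz (h ▸ hKU hx)
    have hne : g z ≠ g x := hg_inj.ne hzx
    have hfst : Tendsto (fun p : ι × (X × X) ↦ f p.1 p.2.1) (l ×ˢ 𝓝 (z, x)) (𝓝 (g z)) :=
      (hlim z).comp (tendsto_fst.prodMk ((continuous_fst.tendsto (z, x)).comp tendsto_snd))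
    have hsnd : Tendsto (fun p : ι × (X × X) ↦ g p.2.2) (l ×ˢ 𝓝 (z, x)) (𝓝 (g x)) :=
      ((hg.comp continuous_snd).tendsto (z, x)).comp tendsto_snd
    exact (hfst.prodMk_nhds hsnd).eventually (isClosed_diagonal.isOpen_compl.mem_nhds hne)
  have hcompact : IsCompact (Uᶜ ×ˢ K) := hU.isClosed_compl.isCompact.prod hK
  have huniform : ∀ᶠ p : ι × (X × X) in l ×ˢ 𝓝ˢ (Uᶜ ×ˢ K), f p.1 p.2.1 ≠ g p.2.2 :=
    hcompact.mem_prod_nhdsSet_of_forall hlocal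
  filter_upwards [huniform.curry] with i hi
  rintro _ ⟨x, hx, rfl⟩
  obtain ⟨z, hz⟩ := hf i (g x)
  by_contra hxU
  exact hi.self_of_nhdsSet (z, x) ⟨fun hzU ↦ hxU ⟨z, hzU, hz⟩, hx⟩ hz

theorem exists_countable_subset_subset_closure [SecondCountableTopology X] (s : Set X) :
    ∃ c ⊆ s, c.Countable ∧ s ⊆ closure c := by
  obtain ⟨c, hc, hdense⟩ := TopologicalSpace.exists_countable_dense s
  refine ⟨(↑) '' c, Subtype.coe_image_subset s c, hc.image _, fun x hx ↦ ?_⟩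
  exact closure_subtype.1 (hdense ⟨x, hx⟩)

theorem exists_countable_subset_forall_mem_closure_inter_Ici [LinearOrder X] [OrderTopology X]
    [SecondCountableTopology X] (s : Set X) :
    ∃ c ⊆ s, c.Countable ∧ ∀ x ∈ s, x ∈ closure (c ∩ Ici x) := by
  obtain ⟨c, hcs, hc, hsc⟩ := exists_countable_subset_subset_closure s
  set isolated := {x ∈ s | 𝓝[s ∩ Ioi x] x = ⊥}
  refine ⟨c ∪ isolated, union_subset hcs fun x hx ↦ hx.1,
    hc.union countable_setOfPred_isolated_right_within, fun x hx ↦ ?_⟩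
  by_cases hx_isolated : x ∈ isolated
  · exact subset_closure ⟨Or.inr hx_isolated, self_mem_Ici⟩
  · have hx_right : x ∈ closure (s ∩ Ioi x) :=
      mem_closure_iff_nhdsWithin_neBot.2 ⟨fun h ↦ hx_isolated ⟨hx, h⟩⟩
    refine mem_closure_iff.2 fun V hV hxV ↦ ?_
    obtain ⟨y, hyV, hys, hxy⟩ := mem_closure_iff.1 hx_right V hV hxV
    obtain ⟨z, ⟨hzV, hxz⟩, hzc⟩ :=
      mem_closure_iff.1 (hsc hys) (V ∩ Ioi x) (hV.inter isOpen_Ioi) ⟨hyV, hxy⟩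
    exact ⟨z, hzV, Or.inl hzc, hxz.le⟩

/-- Right-continuity of a family of maps along the time set `T`, jointly in time and space. -/
def JointlyRightContinuousOn [Preorder ι] [TopologicalSpace ι] (f : ι → X → Y) (T : Set ι) :
    Prop :=
  ∀ t ∈ T, ∀ x, Tendsto (fun p : ι × X ↦ f p.1 p.2) (𝓝[T ∩ Ici t] t ×ˢ 𝓝 x) (𝓝 (f t x))

theorem exists_strictMono_antitone_comp_of_tendsto [LinearOrder ι] [TopologicalSpace ι]
    [OrderClosedTopology ι] {u : ℕ → ι} {t : ι} (hu : Tendsto u atTop (𝓝 t)) (htu : ∀ n, t ≤ u n) :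
    ∃ g : ℕ → ℕ, StrictMono g ∧ Antitone (u ∘ g) := by
  obtain ⟨g, hg | hg⟩ := exists_increasing_or_nonincreasing_subseq (fun a b : ι ↦ b ≤ a) u
  · exact ⟨g, g.strictMono, antitone_nat_of_succ_le fun n ↦ hg n (n + 1) n.lt_succ_self⟩
  · have hmono : StrictMono (u ∘ g) :=
      strictMono_nat_of_lt_succ fun n ↦ not_le.1 (hg n (n + 1) n.lt_succ_self)
    have hle : u (g 1) ≤ t :=
      hmono.monotone.ge_of_tendsto (hu.comp g.strictMono.tendsto_atTop) 1
    exact absurd (hmono Nat.zero_lt_one) (hle.trans (htu (g 0))).not_gt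

theorem JointlyRightContinuousOn.of_seq [LinearOrder ι] [TopologicalSpace ι] [OrderTopology ι]
    [FirstCountableTopology ι] [FirstCountableTopology X] {f : ι → X → Y} {T : Set ι}
    (hf : ∀ t ∈ T, ∀ u : ℕ → ι, (∀ n, u n ∈ T) → Antitone u → Tendsto u atTop (𝓝 t) →
      ∀ (v : ℕ → X) (x : X), Tendsto v atTop (𝓝 x) →
        Tendsto (fun n ↦ f (u n) (v n)) atTop (𝓝 (f t x))) :
    JointlyRightContinuousOn f T := by
  refine fun t ht x ↦ tendsto_of_subseq_tendsto fun p hp ↦ ?_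
  have htime : Tendsto (fun n ↦ (p n).1) atTop (𝓝[T ∩ Ici t] t) := tendsto_fst.comp hp
  have hspace : Tendsto (fun n ↦ (p n).2) atTop (𝓝 x) := tendsto_snd.comp hp
  obtain ⟨hlim, hmem⟩ := tendsto_nhdsWithin_iff.1 htime
  obtain ⟨N, hN⟩ := eventually_atTop.1 hmem
  have hshift : ∀ n, (p (n + N)).1 ∈ T ∩ Ici t := fun n ↦ hN _ (Nat.le_add_left N n)
  obtain ⟨g, hg, hanti⟩ := exists_strictMono_antitone_comp_of_tendsto
    ((tendsto_add_atTop_iff_nat N).2 hlim) fun n ↦ (hshift n).2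
  have hsub : Tendsto (fun n ↦ g n + N) atTop atTop :=
    (tendsto_add_atTop_nat N).comp hg.tendsto_atTop
  exact ⟨fun n ↦ g n + N, hf t ht _ (fun n ↦ (hshift (g n)).1) hanti (hlim.comp hsub) _ x
    (hspace.comp hsub)⟩

theorem JointlyRightContinuousOn.exists_image_subset_image [CompactSpace X] [T2Space Y]
    [Preorder ι] [TopologicalSpace ι] {f : ι → X ≃ₜ Y} {T D : Set ι}
    (hf : JointlyRightContinuousOn (fun t ↦ f t) T) (hDT : D ⊆ T) {t : ι} (ht : t ∈ T)
    (htD : t ∈ closure (D ∩ Ici t)) {K U : Set X} (hK : IsCompact K) (hU : IsOpen U)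
    (hKU : K ⊆ U) : ∃ u ∈ D, t ≤ u ∧ f t '' K ⊆ f u '' U := by
  have hsubset : ∀ᶠ u in 𝓝[D ∩ Ici t] t, f t '' K ⊆ f u '' U :=
    eventually_image_subset_image (fun u ↦ (f u).surjective) (f t).continuous (f t).injective
      (fun x ↦ (hf t ht x).mono_left
        (prod_mono (nhdsWithin_mono t (inter_subset_inter_left _ hDT)) le_rfl)) hK hU hKU
  have : (𝓝[D ∩ Ici t] t).NeBot := mem_closure_iff_nhdsWithin_neBot.1 htD
  obtain ⟨u, hu, huD, htu⟩ := (hsubset.and eventually_mem_nhdsWithin).exists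
  exact ⟨u, huD, htu, hu⟩

end Topology

section CrackPoint

variable {ι X Y : Type*} [TopologicalSpace X] [MeasurableSpace Y]

/-- `r` is a crack point of the family `f` along the filter `l`: the images of every closed set
avoiding `r` have `μ`-measure tending to zero. -/
def IsCrackPoint (μ : Measure Y) (l : Filter ι) (f : ι → X → Y) (r : X) : Prop :=
  ∀ G : Set X, IsClosed G → r ∉ G → Tendsto (fun i ↦ μ (f i '' G)) l (𝓝 0)

variable {μ : Measure Y} {l : Filter ι} {f : ι → X → Y}

theorem IsCrackPoint.mono {l' : Filter ι} {r : X} (h : IsCrackPoint μ l f r) (hl : l' ≤ l) :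
    IsCrackPoint μ l' f r :=
  fun G hG hr ↦ (h G hG hr).mono_left hl

theorem isCrackPoint_map {κ : Type*} {k : Filter κ} {a : κ → ι} {r : X} :
    IsCrackPoint μ (map a k) f r ↔ IsCrackPoint μ k (fun j ↦ f (a j)) r :=
  forall₃_congr fun _ _ _ ↦ tendsto_map'_iff

theorem isCrackPoint_congr {g : ι → X → Y} {r : X} (h : f =ᶠ[l] g) :
    IsCrackPoint μ l f r ↔ IsCrackPoint μ l g r :=
  forall₃_congr fun G _ _ ↦ tendsto_congr' (h.fun_comp fun k ↦ μ (k '' G))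

theorem isCrackPoint_comp_homeomorph {W : Type*} [TopologicalSpace W] (h : W ≃ₜ X) {w : W} :
    IsCrackPoint μ l (fun i ↦ f i ∘ h) w ↔ IsCrackPoint μ l f (h w) := by
  refine ⟨fun hw G hG hwG ↦ ?_, fun hw G hG hwG ↦ ?_⟩
  · simpa only [image_comp, image_preimage_eq _ h.surjective] using
      hw (h ⁻¹' G) (hG.preimage h.continuous) hwG
  · simpa only [image_comp] using
      hw (h '' G) (h.isClosedMap G hG) (by rwa [h.injective.mem_set_image])

theorem IsCrackPoint.eq [T2Space X] [NeZero μ] [l.NeBot] (hf : ∀ i, (f i).Surjective) {x y : X}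
    (hx : IsCrackPoint μ l f x) (hy : IsCrackPoint μ l f y) : x = y := by
  by_contra hne
  obtain ⟨U, V, hU, hV, hxU, hyV, hUV⟩ := t2_separation hne
  have hmass : ∀ i, μ univ ≤ μ (f i '' Uᶜ) + μ (f i '' Vᶜ) := fun i ↦ by
    rw [← (hf i).range_eq, ← image_univ, ← compl_empty, ← hUV.inter_eq, compl_inter, image_union]
    exact measure_union_le _ _
  have hlim : Tendsto (fun i ↦ μ (f i '' Uᶜ) + μ (f i '' Vᶜ)) l (𝓝 (0 + 0)) :=
    (hx _ hU.isClosed_compl (not_not_intro hxU)).add (hy _ hV.isClosed_compl (not_not_intro hyV))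
  have hzero : μ univ ≤ 0 + 0 := ge_of_tendsto' hlim hmass
  exact NeZero.ne μ (Measure.measure_univ_eq_zero.1 (by simpa using hzero))

theorem isCrackPoint_inf_principal_iff [CompactSpace X] [T2Space X] [TopologicalSpace Y]
    [T2Space Y] [Preorder ι] [TopologicalSpace ι] {f : ι → X ≃ₜ Y} {T D : Set ι}
    (hf : JointlyRightContinuousOn (fun t ↦ f t) T) (hDT : D ⊆ T)
    (hD : ∀ t ∈ T, t ∈ closure (D ∩ Ici t)) {r : X} :
    IsCrackPoint μ (atTop ⊓ 𝓟 T) (fun t ↦ f t) r ↔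
      IsCrackPoint μ (atTop ⊓ 𝓟 D) (fun t ↦ f t) r := by
  refine ⟨fun h ↦ h.mono (inf_le_inf_left _ (principal_mono.2 hDT)), fun h G hG hr ↦ ?_⟩
  obtain ⟨U, hU, hGU, hUr⟩ :=
    normal_exists_closure_subset hG isOpen_compl_singleton (subset_compl_singleton_iff.2 hr)
  have hD_lim := h (closure U) isClosed_closure (subset_compl_singleton_iff.1 hUr)
  rw [ENNReal.tendsto_nhds_zero] at hD_lim ⊢
  intro ε hε
  have hD_le : ∀ᶠ u in atTop, u ∈ D → μ (f u '' closure U) ≤ ε :=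
    eventually_inf_principal.1 (hD_lim ε hε)
  refine eventually_inf_principal.2 ?_
  filter_upwards [eventually_forall_ge_atTop.2 hD_le] with t ht htT
  obtain ⟨u, huD, htu, hsub⟩ :=
    hf.exists_image_subset_image hDT htT (hD t htT) hG.isCompact hU hGU
  exact (measure_mono (hsub.trans (image_mono subset_closure))).trans (ht u htu huD)

end CrackPoint

section Measurability

variable {Ω X Y : Type*} [MeasurableSpace Ω] [TopologicalSpace X] [SecondCountableTopology X]
  [TopologicalSpace Y] [SecondCountableTopology Y] [MeasurableSpace Y] [OpensMeasurableSpace Y]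

theorem measurable_measure_image {f : Ω → X → Y} (hf_meas : ∀ x, Measurable fun ω ↦ f ω x)
    (hf_cont : ∀ ω, Continuous (f ω)) {G : Set X} (hG : ∀ ω, IsClosed (f ω '' G))
    (μ : Measure Y) [SFinite μ] :
    Measurable fun ω ↦ μ (f ω '' G) := by
  obtain ⟨c, hcG, hc, hGc⟩ := exists_countable_subset_subset_closure G
  have hB := TopologicalSpace.isBasis_countableBasis Y
  have hmem : ∀ ω y, y ∈ f ω '' G ↔
      ∀ V ∈ TopologicalSpace.countableBasis Y, y ∈ V → ∃ x ∈ c, f ω x ∈ V := by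
    intro ω y
    have himage : f ω '' G = closure (f ω '' c) :=
      (((image_mono hGc).trans (image_closure_subset_closure_image (hf_cont ω))).antisymm
        (closure_minimal (image_mono hcG) (hG ω)))
    simp only [himage, hB.mem_closure_iff, inter_comm _ (f ω '' c), inter_nonempty,
      exists_mem_image]
  have hgraph : MeasurableSet {p : Ω × Y | p.2 ∈ f p.1 '' G} := by
    have heq : {p : Ω × Y | p.2 ∈ f p.1 '' G} = ⋂ V ∈ TopologicalSpace.countableBasis Y,
        ((Prod.snd ⁻¹' V)ᶜ ∪ ⋃ x ∈ c, {p | f p.1 x ∈ V}) := by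
      ext p
      simp [hmem, imp_iff_not_or]
    rw [heq]
    refine .biInter (TopologicalSpace.countable_countableBasis Y) fun V hV ↦ ?_
    have hV_meas : MeasurableSet V := (hB.isOpen hV).measurableSet
    exact (measurable_snd hV_meas).compl.union
      (.biUnion hc fun x _ ↦ ((hf_meas x).comp measurable_fst) hV_meas)
  exact measurable_measure_prodMk_left hgraph

end Measurability

theorem measurableSet_exists_mem_of_isClosed {Ω X : Type*} [MeasurableSpace Ω]
    [TopologicalSpace X] [MeasurableSpace X] [BorelSpace X] {P : Ω → X → Prop}
    (hP_unique : ∀ ω x y, P ω x → P ω y → x = y)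
    (hP_closed : ∀ C, IsClosed C → MeasurableSet {ω | ∃ x ∈ C, P ω x})
    {B : Set X} (hB : MeasurableSet B) : MeasurableSet {ω | ∃ x ∈ B, P ω x} := by
  have hgen : ‹MeasurableSpace X› = .generateFrom {C | IsClosed C} :=
    BorelSpace.measurable_eq.trans borel_eq_generateFrom_isClosed
  induction B, hB using MeasurableSpace.induction_on_inter hgen isPiSystem_isClosed with
  | empty => simp
  | basic C hC => exact hP_closed C hC
  | compl B _ ih =>
    have hdiff : {ω | ∃ x ∈ Bᶜ, P ω x} = {ω | ∃ x ∈ univ, P ω x} \ {ω | ∃ x ∈ B, P ω x} := by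
      ext ω
      constructor
      · rintro ⟨x, hxB, hx⟩
        exact ⟨⟨x, mem_univ x, hx⟩, fun ⟨y, hyB, hy⟩ ↦ hxB (hP_unique ω x y hx hy ▸ hyB)⟩
      · rintro ⟨⟨x, -, hx⟩, hxB⟩
        exact ⟨x, fun h ↦ hxB ⟨x, h, hx⟩, hx⟩
    exact hdiff ▸ (hP_closed univ isClosed_univ).diff ih
  | iUnion B _ _ ih =>
    have hunion : {ω | ∃ x ∈ ⋃ n, B n, P ω x} = ⋃ n, {ω | ∃ x ∈ B n, P ω x} := by
      ext ω
      simp only [mem_iUnion, mem_ofPred_eq]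
      exact ⟨fun ⟨x, ⟨n, hn⟩, hx⟩ ↦ ⟨n, x, hn, hx⟩, fun ⟨n, x, hn, hx⟩ ↦ ⟨x, ⟨n, hn⟩, hx⟩⟩
    exact hunion ▸ .iUnion ih

section CrackPointMeasurability

variable {ι Ω X Y : Type*} [MeasurableSpace Ω] [TopologicalSpace X] [MeasurableSpace Y]
  {μ : Measure Y}

theorem exists_mem_isCrackPoint_iff {l : Filter ι} {f : ι → X → Y} {C : Set X} (hC : IsCompact C)
    {𝓑 : Set (Set X)} (h𝓑 : TopologicalSpace.IsTopologicalBasis 𝓑) :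
    (∃ r ∈ C, IsCrackPoint μ l f r) ↔ ∀ 𝓤 ⊆ 𝓑, 𝓤.Finite → C ⊆ ⋃₀ 𝓤 →
      ∃ U ∈ 𝓤, Tendsto (fun i ↦ μ (f i '' Uᶜ)) l (𝓝 0) := by
  constructor
  · rintro ⟨r, hrC, hr⟩ 𝓤 h𝓤 - hcover
    obtain ⟨U, hU, hrU⟩ := hcover hrC
    exact ⟨U, hU, hr Uᶜ (h𝓑.isOpen (h𝓤 hU)).isClosed_compl (not_not_intro hrU)⟩
  · intro h
    by_contra! hnone
    have hnbhd : ∀ r ∈ C, ∃ U ∈ 𝓑, r ∈ U ∧ ¬ Tendsto (fun i ↦ μ (f i '' Uᶜ)) l (𝓝 0) := by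
      intro r hr
      obtain ⟨G, hG, hrG, hGlim⟩ :
          ∃ G, IsClosed G ∧ r ∉ G ∧ ¬ Tendsto (fun i ↦ μ (f i '' G)) l (𝓝 0) := by
        simpa only [IsCrackPoint, not_forall, exists_prop] using hnone r hr
      obtain ⟨U, hU, hrU, hUG⟩ := h𝓑.exists_subset_of_mem_open hrG hG.isOpen_compl
      refine ⟨U, hU, hrU, fun hlim ↦ hGlim ?_⟩
      exact tendsto_of_tendsto_of_tendsto_of_le_of_le tendsto_const_nhds hlim (fun _ ↦ zero_le)
        fun i ↦ measure_mono (image_mono (subset_compl_comm.1 hUG))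
    obtain ⟨𝓤, h𝓤, h𝓤_fin, hcover⟩ := hC.elim_finite_subcover_image
      (b := {U ∈ 𝓑 | ¬ Tendsto (fun i ↦ μ (f i '' Uᶜ)) l (𝓝 0)}) (c := id)
      (fun U hU ↦ h𝓑.isOpen hU.1) fun r hr ↦ by
        obtain ⟨U, hU, hrU, hlim⟩ := hnbhd r hr
        exact mem_biUnion (show U ∈ {U ∈ 𝓑 | _} from ⟨hU, hlim⟩) hrU
    obtain ⟨U, hU, hlim⟩ :=
      h 𝓤 (fun U hU ↦ (h𝓤 hU).1) h𝓤_fin (by rwa [sUnion_eq_biUnion])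
    exact (h𝓤 hU).2 hlim

theorem measurableSet_exists_mem_isCrackPoint [SecondCountableTopology X] [Countable ι]
    {l : Filter ι} [l.IsCountablyGenerated] {f : ι → Ω → X → Y}
    (hf : ∀ i G, IsClosed G → Measurable fun ω ↦ μ (f i ω '' G)) {C : Set X} (hC : IsCompact C) :
    MeasurableSet {ω | ∃ r ∈ C, IsCrackPoint μ l (fun i ↦ f i ω) r} := by
  have h𝓑 := TopologicalSpace.isBasis_countableBasis X
  have h𝓑_countable := TopologicalSpace.countable_countableBasis X
  have heq : {ω | ∃ r ∈ C, IsCrackPoint μ l (fun i ↦ f i ω) r} =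
      ⋂ 𝓤 ∈ {𝓤 | (𝓤.Finite ∧ 𝓤 ⊆ TopologicalSpace.countableBasis X) ∧ C ⊆ ⋃₀ 𝓤},
        ⋃ U ∈ 𝓤, {ω | Tendsto (fun i ↦ μ (f i ω '' Uᶜ)) l (𝓝 0)} := by
    ext ω
    simp only [mem_ofPred_eq, exists_mem_isCrackPoint_iff hC h𝓑, mem_iInter, mem_iUnion,
      exists_prop, and_imp]
    exact forall_congr' fun 𝓤 ↦ forall_comm
  rw [heq]
  refine .biInter ((countable_ofPred_finite_subset h𝓑_countable).mono fun _ h ↦ h.1) ?_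
  rintro 𝓤 ⟨⟨h𝓤_fin, h𝓤⟩, -⟩
  exact .biUnion h𝓤_fin.countable fun U hU ↦
    measurableSet_tendsto (𝓝 0) fun i ↦ hf i Uᶜ (h𝓑.isOpen (h𝓤 hU)).isClosed_compl

theorem measurableSet_exists_mem_isCrackPoint_atTop_inf_principal [CompactSpace X] [T2Space X]
    [SecondCountableTopology X] [TopologicalSpace Y] [T2Space Y] [SecondCountableTopology Y]
    [OpensMeasurableSpace Y] [SFinite μ] [LinearOrder ι] [TopologicalSpace ι] [OrderTopology ι]
    [SecondCountableTopology ι] {φ : ι → Ω → X ≃ₜ Y} {T : Set ι}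
    (hφ_meas : ∀ t ∈ T, ∀ x, Measurable fun ω ↦ φ t ω x)
    (hφ_cont : ∀ ω, JointlyRightContinuousOn (fun t ↦ φ t ω) T) {C : Set X} (hC : IsClosed C) :
    MeasurableSet {ω | ∃ r ∈ C, IsCrackPoint μ (atTop ⊓ 𝓟 T) (fun t ↦ φ t ω) r} := by
  obtain ⟨D, hDT, hD_countable, hD⟩ := exists_countable_subset_forall_mem_closure_inter_Ici T
  have : Countable D := hD_countable
  have hD_iff : ∀ ω r, IsCrackPoint μ (atTop ⊓ 𝓟 T) (fun t ↦ φ t ω) r ↔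
      IsCrackPoint μ (comap ((↑) : D → ι) atTop) (fun t ↦ φ t ω) r := fun ω r ↦ by
    rw [isCrackPoint_inf_principal_iff (hφ_cont ω) hDT hD, ← Filter.subtype_coe_map_comap,
      isCrackPoint_map]
  simp only [hD_iff]
  refine measurableSet_exists_mem_isCrackPoint (fun t G hG ↦ ?_) hC.isCompact
  exact measurable_measure_image (hφ_meas t (hDT t.2)) (fun ω ↦ (φ t ω).continuous)
    (fun ω ↦ (φ t ω).isClosedMap G hG) μ

end CrackPointMeasurability

section Cocycle

variable {ι Ω X : Type*} [TopologicalSpace X]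

theorem map_add_left_atTop_inf_principal [AddCommGroup ι] [PartialOrder ι] [IsOrderedAddMonoid ι]
    {T : Set ι} {t : ι} (hT_add : ∀ s ∈ T, t + s ∈ T) (hT_sub : ∀ s ∈ T, t ≤ s → s - t ∈ T) :
    map (t + ·) (atTop ⊓ 𝓟 T) = atTop ⊓ 𝓟 T := by
  rw [map_inf (add_right_injective t), map_principal,
    show map (t + ·) atTop = atTop from (OrderIso.addLeft t).map_atTop]
  refine le_antisymm (inf_le_inf_left _ (principal_mono.2 (image_subset_iff.2 hT_add)))
    (le_inf inf_le_left (le_principal_iff.2 (mem_inf_principal.2 ?_)))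
  filter_upwards [eventually_ge_atTop t] with s hts hs
  exact ⟨s - t, hT_sub s hs hts, add_sub_cancel t s⟩

theorem isCrackPoint_cocycle_iff [MeasurableSpace X] {μ : Measure X} [AddCommGroup ι]
    [PartialOrder ι] [IsOrderedAddMonoid ι] {T : Set ι} {θ : ι → Ω → Ω} {φ : ι → Ω → X ≃ₜ X} {t : ι}
    (hT_add : ∀ s ∈ T, t + s ∈ T) (hT_sub : ∀ s ∈ T, t ≤ s → s - t ∈ T)
    (hφ : ∀ s ∈ T, ∀ ω x, φ (t + s) ω x = φ s (θ t ω) (φ t ω x)) {ω : Ω} {x : X} :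
    IsCrackPoint μ (atTop ⊓ 𝓟 T) (fun s ↦ φ s (θ t ω)) (φ t ω x) ↔
      IsCrackPoint μ (atTop ⊓ 𝓟 T) (fun s ↦ φ s ω) x := by
  have hcocycle : (fun s ↦ φ s (θ t ω) ∘ φ t ω) =ᶠ[atTop ⊓ 𝓟 T] fun s ↦ ⇑(φ (t + s) ω) :=
    eventually_inf_principal.2 (.of_forall fun s hs ↦ funext fun x ↦ (hφ s hs ω x).symm)
  rw [← isCrackPoint_comp_homeomorph, isCrackPoint_congr hcocycle,
    ← isCrackPoint_map (a := (t + ·)) (f := fun s ↦ ⇑(φ s ω)),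
    map_add_left_atTop_inf_principal hT_add hT_sub]

/-- The contractive sample points: those `ω` for which `fun i ↦ φ i ω` has a crack point. -/
def contractiveSet [MeasurableSpace X] (μ : Measure X) (l : Filter ι) (φ : ι → Ω → X ≃ₜ X) :
    Set Ω :=
  {ω | ∃ r, IsCrackPoint μ l (fun i ↦ φ i ω) r}

theorem crackPoint_measurable_and_equivariant_general {mΩ : MeasurableSpace Ω} [CompactSpace X]
    [T2Space X] [SecondCountableTopology X] [MeasurableSpace X] [BorelSpace X] (μ : Measure X)
    [SFinite μ] [NeZero μ] [AddCommGroup ι] [LinearOrder ι] [IsOrderedAddMonoid ι]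
    [TopologicalSpace ι] [OrderTopology ι] [SecondCountableTopology ι] {T : Set ι}
    (hT_unbounded : ∃ᶠ t in atTop, t ∈ T) (hT_add : ∀ s ∈ T, ∀ t ∈ T, s + t ∈ T)
    (hT_sub : ∀ s ∈ T, ∀ t ∈ T, s ≤ t → t - s ∈ T) {θ : ι → Ω → Ω} {φ : ι → Ω → X ≃ₜ X}
    (hφ_meas : ∀ t ∈ T, ∀ x, Measurable fun ω ↦ φ t ω x)
    (hφ_cocycle : ∀ s ∈ T, ∀ t ∈ T, ∀ ω x, φ (s + t) ω x = φ t (θ s ω) (φ s ω x))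
    (hφ_cont : ∀ ω, JointlyRightContinuousOn (fun t ↦ φ t ω) T) (r : Ω → X)
    (hr : ∀ ω ∈ contractiveSet μ (atTop ⊓ 𝓟 T) φ,
      IsCrackPoint μ (atTop ⊓ 𝓟 T) (fun t ↦ φ t ω) (r ω)) :
    MeasurableSet (contractiveSet μ (atTop ⊓ 𝓟 T) φ) ∧
    (∀ B : Set X, MeasurableSet B →
      MeasurableSet {ω | ω ∈ contractiveSet μ (atTop ⊓ 𝓟 T) φ ∧ r ω ∈ B}) ∧
    (∀ t ∈ T, θ t ⁻¹' contractiveSet μ (atTop ⊓ 𝓟 T) φ = contractiveSet μ (atTop ⊓ 𝓟 T) φ ∧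
      ∀ ω ∈ contractiveSet μ (atTop ⊓ 𝓟 T) φ, r (θ t ω) = φ t ω (r ω)) := by
  have : (atTop ⊓ 𝓟 T).NeBot := frequently_mem_iff_neBot.1 hT_unbounded
  have hunique : ∀ ω x y, IsCrackPoint μ (atTop ⊓ 𝓟 T) (fun t ↦ φ t ω) x →
      IsCrackPoint μ (atTop ⊓ 𝓟 T) (fun t ↦ φ t ω) y → x = y :=
    fun ω _ _ ↦ IsCrackPoint.eq fun t ↦ (φ t ω).surjective
  have hmem : ∀ B : Set X, {ω | ω ∈ contractiveSet μ (atTop ⊓ 𝓟 T) φ ∧ r ω ∈ B} =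
      {ω | ∃ x ∈ B, IsCrackPoint μ (atTop ⊓ 𝓟 T) (fun t ↦ φ t ω) x} := fun B ↦ by
    ext ω
    constructor
    · rintro ⟨hω, hrB⟩
      exact ⟨r ω, hrB, hr ω hω⟩
    · rintro ⟨x, hxB, hx⟩
      exact ⟨⟨x, hx⟩, hunique ω x _ hx (hr ω ⟨x, hx⟩) ▸ hxB⟩
  have hmeas : ∀ B, MeasurableSet B →
      MeasurableSet {ω | ω ∈ contractiveSet μ (atTop ⊓ 𝓟 T) φ ∧ r ω ∈ B} := fun B hB ↦ by
    rw [hmem]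
    exact measurableSet_exists_mem_of_isClosed hunique (fun C hC ↦
      measurableSet_exists_mem_isCrackPoint_atTop_inf_principal hφ_meas hφ_cont hC) hB
  refine ⟨by simpa using hmeas univ .univ, hmeas, fun t ht ↦ ?_⟩
  have hshift : ∀ ω x, IsCrackPoint μ (atTop ⊓ 𝓟 T) (fun s ↦ φ s (θ t ω)) (φ t ω x) ↔
      IsCrackPoint μ (atTop ⊓ 𝓟 T) (fun s ↦ φ s ω) x := fun ω x ↦
    isCrackPoint_cocycle_iff (hT_add t ht) (hT_sub t ht) (hφ_cocycle t ht)
  have hΩc : θ t ⁻¹' contractiveSet μ (atTop ⊓ 𝓟 T) φ = contractiveSet μ (atTop ⊓ 𝓟 T) φ :=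
    ext fun ω ↦ (φ t ω).surjective.exists.trans (exists_congr (hshift ω))
  exact ⟨hΩc, fun ω hω ↦ hunique _ _ _ (hr _ (hΩc.superset hω)) ((hshift ω _).2 (hr ω hω))⟩

end Cocycle

namespace RDS

variable {Ω : Type} [MeasurableSpace Ω] (S : RDS Ω)

theorem frequently_mem_T : ∃ᶠ t in atTop, t ∈ S.T := by
  refine frequently_atTop.2 fun a ↦ ?_
  obtain ⟨n, hn⟩ := exists_nat_ge a
  refine ⟨n, hn, ?_⟩
  rcases S.T_cases with hT | hT <;> rw [hT]
  · exact mem_range_self n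
  · exact mem_Ici.2 (Nat.cast_nonneg n)

theorem add_mem_T : ∀ s ∈ S.T, ∀ t ∈ S.T, s + t ∈ S.T := by
  rcases S.T_cases with hT | hT <;> rw [hT]
  · rintro _ ⟨a, rfl⟩ _ ⟨b, rfl⟩
    exact ⟨a + b, Nat.cast_add a b⟩
  · exact fun s hs t ht ↦ mem_Ici.2 (add_nonneg hs ht)

theorem sub_mem_T : ∀ s ∈ S.T, ∀ t ∈ S.T, s ≤ t → t - s ∈ S.T := by
  rcases S.T_cases with hT | hT <;> rw [hT]
  · rintro _ ⟨a, rfl⟩ _ ⟨b, rfl⟩ hab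
    exact ⟨b - a, Nat.cast_sub (Nat.cast_le.1 hab)⟩
  · exact fun s _ t _ hst ↦ sub_nonneg.2 hst

theorem measurable_φ_apply {t : ℝ} (ht : t ∈ S.T) (x : UnitAddCircle) :
    Measurable[S.Fplus] fun ω ↦ S.φ t ω x := by
  exact ((S.φ_meas t ht).comp measurable_prodMk_right).mono (le_iSup₂_of_le t ht le_rfl) le_rfl

theorem jointlyRightContinuousOn (ω : Ω) : JointlyRightContinuousOn (fun t ↦ S.φ t ω) S.T :=
  .of_seq (S.φ_cadlag_right ω)

end RDS

/-- `Ω_c` is `𝓕₊`-measurable, the crack-point map is measurable w.r.t. the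
σ-algebra of `𝓕₊`-measurable subsets of `Ω_c`, and for each `t ∈ 𝕋⁺` one has
`(θ^t)⁻¹(Ω_c) = Ω_c` and `r̃(θ^t ω) = φ(t,ω) r̃(ω)` on `Ω_c`. -/
theorem crackPoint_measurable_and_equivariant
    {Ω : Type} [MeasurableSpace Ω] (S : RDS Ω) (r : Ω → UnitAddCircle)
    (hr : ∀ ω ∈ S.Ωc, S.CrackPoint ω (r ω)) :
    MeasurableSet[S.Fplus] S.Ωc ∧
    (∀ B : Set UnitAddCircle, MeasurableSet B →
      MeasurableSet[S.Fplus] {ω | ω ∈ S.Ωc ∧ r ω ∈ B}) ∧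
    (∀ t ∈ S.T, S.θ t ⁻¹' S.Ωc = S.Ωc ∧
      ∀ ω ∈ S.Ωc, r (S.θ t ω) = S.φ t ω (r ω)) :=
  crackPoint_measurable_and_equivariant_general volume S.frequently_mem_T S.add_mem_T S.sub_mem_T
    (fun _ ↦ S.measurable_φ_apply) S.φ_cocycle S.jointlyRightContinuousOn r hr
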